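/- Define matrices R(x,a,b,c,d) := V(c,b,x)·U(x,d,a) and S(x,a,b,c,d) := U(b,x,a)·V(c,x,d) as 2×2 matrices, and let R₁, S₂ denote their embeddings into GL₃ (block in rows/columns 1,2 for R₁ and 2,3 for S₂). Then the generalized Yang–Baxter relation R₁(b₂,a₂,a₃,a₄,c)·S₂(b₁,a₁,a₂,c,a₆)·R₁(b₃,a₆,c,a₄,a₅) = S₂(b₃',a₁,a₂,a₃,c')·R₁(b₁',c',a₃,a₄,a₅)·S₂(b₂',a₁,c',a₅,a₆) holds whenever the hexahedron system holds: c·b₁·b₁' = a₂a₄a₆ + b₁b₂b₃ + c·a₁a₄; c·b₂·b₂' = a₂a₄a₆ + b₁b₂b₃ + c·a₃a₆; c·b₃·b₃' = a₂a₄a₆ + b₁b₂b₃ + c·a₂a₅; and b₁b₂b₃c²c' = (a₂a₄a₆+b₁b₂b₃)² + (a₂a₄a₆+b₁b₂b₃)(a₁a₄+a₃a₆+a₂a₅)c + (a₁a₂a₄a₅+a₁a₃a₄a₆+a₂a₃a₅a₆)c² + a₁a₃a₅c³. -/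

import Mathlib

open Matrix

noncomputable def Umat {K : Type*} [Field K] (a b c : K) : Matrix (Fin 2) (Fin 2) K :=
  !![1, 0; c * b⁻¹, a * b⁻¹]

noncomputable def Vmat {K : Type*} [Field K] (a b c : K) : Matrix (Fin 2) (Fin 2) K :=
  !![b * c⁻¹, a * c⁻¹; 0, 1]

noncomputable def emb1 {K : Type*} [Field K] (M : Matrix (Fin 2) (Fin 2) K) :
    Matrix (Fin 3) (Fin 3) K :=
  !![M 0 0, M 0 1, 0; M 1 0, M 1 1, 0; 0, 0, 1]

noncomputable def emb2 {K : Type*} [Field K] (M : Matrix (Fin 2) (Fin 2) K) :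
    Matrix (Fin 3) (Fin 3) K :=
  !![1, 0, 0; 0, M 0 0, M 0 1; 0, M 1 0, M 1 1]

noncomputable def R1 {K : Type*} [Field K] (x a b c d : K) : Matrix (Fin 3) (Fin 3) K :=
  emb1 (Vmat c b x * Umat x d a)

noncomputable def S2 {K : Type*} [Field K] (x a b c d : K) : Matrix (Fin 3) (Fin 3) K :=
  emb2 (Umat b x a * Vmat c x d)

/-!
With `A = a₂a₄a₆ + b₁b₂b₃` and `r = A / c`, the first three equations of the hexahedron system say
`bᵢbᵢ' = r + pᵢ`, where `p₁ = a₁a₄`, `p₂ = a₃a₆`, `p₃ = a₂a₅`. The system is then invariant under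
the antipodal map `aᵢ ↔ aᵢ₊₃`, `bᵢ ↔ bᵢ'`, `c ↔ c'` of the hexahedron; the crux is
`p₁p₂p₃ = a₁a₃a₅ · a₂a₄a₆`, which gives `r = (a₁a₃a₅ + b₁'b₂'b₃') / c'`.
Up to monomial factors in the `aᵢ`, the antipodal map carries the entries of one side of the
Yang–Baxter relation to those of the other, reflected in the antidiagonal, so three entries and this
identity for `r` account for all nine.
-/

section Factors

variable {K : Type*} [Field K]

/-- The diagonal obtained from `x` by a flip in a quadrilateral with consecutive sides
`a, b, c, d`, as given by Ptolemy's relation `x * x' = a * c + b * d`. Up to the factor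
`d⁻¹`, the entries of `R(x, a, b, c, d)` and of `S(x, a, b, c, d)` are `a`, `c`, `x` and `x'`. -/
def ptolemyFlip (x a b c d : K) : K :=
  (a * c + b * d) / x

theorem Vmat_mul_Umat_eq_smul {x d : K} (a b c : K) (hx : x ≠ 0) (hd : d ≠ 0) :
    Vmat c b x * Umat x d a = d⁻¹ • !![ptolemyFlip x a b c d, c; a, x] := by
  ext i j
  fin_cases i <;> fin_cases j <;>
    simp only [Vmat, Umat, ptolemyFlip, mul_fin_two, Matrix.smul_apply, smul_eq_mul, of_apply,
      Fin.zero_eta, Fin.mk_one, cons_val] <;>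
    field_simp <;> ring

-- The antipodal map turns the quadrilateral of an `S` factor into that of an `R` factor rotated by
-- a half-turn, hence the order `c d a b` of the sides.
theorem Umat_mul_Vmat_eq_smul {x d : K} (a b c : K) (hx : x ≠ 0) (hd : d ≠ 0) :
    Umat b x a * Vmat c x d = d⁻¹ • !![x, c; a, ptolemyFlip x c d a b] := by
  ext i j
  fin_cases i <;> fin_cases j <;>
    simp only [Vmat, Umat, ptolemyFlip, mul_fin_two, Matrix.smul_apply, smul_eq_mul, of_apply,
      Fin.zero_eta, Fin.mk_one, cons_val] <;>
    field_simp <;> ring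

theorem emb1_mul_emb2_mul_emb1 (L M N : Matrix (Fin 2) (Fin 2) K) :
    emb1 L * emb2 M * emb1 N =
      !![L 0 0 * N 0 0 + L 0 1 * M 0 0 * N 1 0, L 0 0 * N 0 1 + L 0 1 * M 0 0 * N 1 1,
          L 0 1 * M 0 1;
        L 1 0 * N 0 0 + L 1 1 * M 0 0 * N 1 0, L 1 0 * N 0 1 + L 1 1 * M 0 0 * N 1 1,
          L 1 1 * M 0 1;
        M 1 0 * N 1 0, M 1 0 * N 1 1, M 1 1] := by
  ext i j
  fin_cases i <;> fin_cases j <;> simp [emb1, emb2, Matrix.mul_apply, Fin.sum_univ_three]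

theorem emb2_mul_emb1_mul_emb2 (L M N : Matrix (Fin 2) (Fin 2) K) :
    emb2 L * emb1 M * emb2 N =
      !![M 0 0, M 0 1 * N 0 0, M 0 1 * N 0 1;
        L 0 0 * M 1 0, L 0 0 * M 1 1 * N 0 0 + L 0 1 * N 1 0,
          L 0 0 * M 1 1 * N 0 1 + L 0 1 * N 1 1;
        L 1 0 * M 1 0, L 1 0 * M 1 1 * N 0 0 + L 1 1 * N 1 0,
          L 1 0 * M 1 1 * N 0 1 + L 1 1 * N 1 1] := by
  ext i j
  fin_cases i <;> fin_cases j <;> simp [emb1, emb2, Matrix.mul_apply, Fin.sum_univ_three]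

theorem R1_mul_S2_mul_R1 {a₅ a₆ b₁ b₂ b₃ c : K} (a₁ a₂ a₃ a₄ : K)
    (ha₅ : a₅ ≠ 0) (ha₆ : a₆ ≠ 0) (hb₁ : b₁ ≠ 0) (hb₂ : b₂ ≠ 0) (hb₃ : b₃ ≠ 0) (hc : c ≠ 0) :
    R1 b₂ a₂ a₃ a₄ c * S2 b₁ a₁ a₂ c a₆ * R1 b₃ a₆ c a₄ a₅ =
      !![(ptolemyFlip b₂ a₂ a₃ a₄ c * ptolemyFlip b₃ a₆ c a₄ a₅ + a₄ * b₁) / c / a₅,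
          (ptolemyFlip b₂ a₂ a₃ a₄ c * a₆ + b₁ * b₃) / c * (a₄ / (a₅ * a₆)), a₄ / a₆;
        (ptolemyFlip b₃ a₆ c a₄ a₅ * a₂ + b₁ * b₂) / c / a₅,
          (a₂ * a₄ * a₆ + b₁ * b₂ * b₃) / c / (a₅ * a₆), b₂ / a₆;
        a₁ / a₅, b₃ * (a₁ / (a₅ * a₆)), ptolemyFlip b₁ c a₆ a₁ a₂ / a₆] := by
  rw [R1, S2, R1, Vmat_mul_Umat_eq_smul _ _ _ hb₂ hc, Umat_mul_Vmat_eq_smul _ _ _ hb₁ ha₆,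
    Vmat_mul_Umat_eq_smul _ _ _ hb₃ ha₅, emb1_mul_emb2_mul_emb1]
  ext i j
  fin_cases i <;> fin_cases j <;>
    simp only [Matrix.smul_apply, smul_eq_mul, of_apply, Fin.zero_eta, Fin.mk_one, Fin.reduceFinMk,
      cons_val] <;>
    field_simp

theorem S2_mul_R1_mul_S2 {a₅ a₆ b₁ b₂ b₃ c : K} (a₁ a₂ a₃ a₄ : K)
    (ha₅ : a₅ ≠ 0) (ha₆ : a₆ ≠ 0) (hb₁ : b₁ ≠ 0) (hb₂ : b₂ ≠ 0) (hb₃ : b₃ ≠ 0) (hc : c ≠ 0) :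
    S2 b₃ a₁ a₂ a₃ c * R1 b₁ c a₃ a₄ a₅ * S2 b₂ a₁ c a₅ a₆ =
      !![ptolemyFlip b₁ c a₃ a₄ a₅ / a₅, b₂ * (a₄ / (a₅ * a₆)), a₄ / a₆;
        b₃ / a₅, (a₅ * a₁ * a₃ + b₁ * b₂ * b₃) / c / (a₅ * a₆),
          (ptolemyFlip b₂ a₅ a₆ a₁ c * a₃ + b₁ * b₃) / c / a₆;
        a₁ / a₅, (ptolemyFlip b₃ a₃ c a₁ a₂ * a₅ + b₁ * b₂) / c * (a₁ / (a₅ * a₆)),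
          (ptolemyFlip b₂ a₅ a₆ a₁ c * ptolemyFlip b₃ a₃ c a₁ a₂ + a₁ * b₁) / c / a₆] := by
  rw [S2, R1, S2, Umat_mul_Vmat_eq_smul _ _ _ hb₃ hc, Vmat_mul_Umat_eq_smul _ _ _ hb₁ ha₅,
    Umat_mul_Vmat_eq_smul _ _ _ hb₂ ha₆, emb2_mul_emb1_mul_emb2]
  ext i j
  fin_cases i <;> fin_cases j <;>
    simp only [Matrix.smul_apply, smul_eq_mul, of_apply, Fin.zero_eta, Fin.mk_one, Fin.reduceFinMk,
      cons_val] <;>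
    field_simp <;> ring

end Factors

/-- The hexahedron system relating `(b₁, b₂, b₃, c)` to `(b₁', b₂', b₃', c')`, with its
first three equations solved for `bᵢ * bᵢ'` so that its antipodal symmetry becomes visible: `r` is
the common value of `bᵢ * bᵢ' - pᵢ`, where `p₁ = a₁ * a₄`, `p₂ = a₃ * a₆`, `p₃ = a₂ * a₅`. -/
structure IsHexahedronMove {R : Type*} [CommRing R]
    (a₁ a₂ a₃ a₄ a₅ a₆ b₁ b₂ b₃ c b₁' b₂' b₃' c' r : R) : Prop where
  c_mul_r : c * r = a₂ * a₄ * a₆ + b₁ * b₂ * b₃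
  b₁_mul : b₁ * b₁' = r + a₁ * a₄
  b₂_mul : b₂ * b₂' = r + a₃ * a₆
  b₃_mul : b₃ * b₃' = r + a₂ * a₅
  b_mul_c' : b₁ * b₂ * b₃ * c' =
    r ^ 2 + r * (a₁ * a₄ + a₃ * a₆ + a₂ * a₅)
      + (a₁ * a₄ * (a₃ * a₆) + a₁ * a₄ * (a₂ * a₅) + a₃ * a₆ * (a₂ * a₅)) + a₁ * a₃ * a₅ * c

namespace IsHexahedronMove

theorem antipode {R : Type*} [CommRing R] [NoZeroDivisors R]
    {a₁ a₂ a₃ a₄ a₅ a₆ b₁ b₂ b₃ c b₁' b₂' b₃' c' r : R}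
    (h : IsHexahedronMove a₁ a₂ a₃ a₄ a₅ a₆ b₁ b₂ b₃ c b₁' b₂' b₃' c' r)
    (hb : b₁ * b₂ * b₃ ≠ 0) :
    IsHexahedronMove a₄ a₅ a₆ a₁ a₂ a₃ b₁' b₂' b₃' c' b₁ b₂ b₃ c r := by
  obtain ⟨hc, h₁, h₂, h₃, hc'⟩ := h
  have prod_mul_prod : b₁ * b₂ * b₃ * (b₁' * b₂' * b₃') =
      (r + a₁ * a₄) * (r + a₃ * a₆) * (r + a₂ * a₅) := by
    rw [← h₁, ← h₂, ← h₃]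
    ring
  refine ⟨mul_left_cancel₀ hb ?_, ?_, ?_, ?_, mul_left_cancel₀ hb ?_⟩
  · linear_combination r * hc' - prod_mul_prod + a₁ * a₃ * a₅ * hc
  · linear_combination h₁
  · linear_combination h₂
  · linear_combination h₃
  · linear_combination c * prod_mul_prod - a₂ * a₄ * a₆ * hc'
      + (r ^ 2 + r * (a₁ * a₄ + a₃ * a₆ + a₂ * a₅)
        + (a₁ * a₄ * (a₃ * a₆) + a₁ * a₄ * (a₂ * a₅) + a₃ * a₆ * (a₂ * a₅))) * hc

variable {K : Type*} [Field K] {a₁ a₂ a₃ a₄ a₅ a₆ b₁ b₂ b₃ c b₁' b₂' b₃' c' r : K}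

theorem of_recurrence (hc : c ≠ 0)
    (h₁ : c * b₁ * b₁' = a₂ * a₄ * a₆ + b₁ * b₂ * b₃ + c * (a₁ * a₄))
    (h₂ : c * b₂ * b₂' = a₂ * a₄ * a₆ + b₁ * b₂ * b₃ + c * (a₃ * a₆))
    (h₃ : c * b₃ * b₃' = a₂ * a₄ * a₆ + b₁ * b₂ * b₃ + c * (a₂ * a₅))
    (hc' : b₁ * b₂ * b₃ * c ^ 2 * c' =
      (a₂ * a₄ * a₆ + b₁ * b₂ * b₃) ^ 2
      + (a₂ * a₄ * a₆ + b₁ * b₂ * b₃) * (a₁ * a₄ + a₃ * a₆ + a₂ * a₅) * c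
      + (a₁ * a₂ * a₄ * a₅ + a₁ * a₃ * a₄ * a₆ + a₂ * a₃ * a₅ * a₆) * c ^ 2
      + a₁ * a₃ * a₅ * c ^ 3) :
    IsHexahedronMove a₁ a₂ a₃ a₄ a₅ a₆ b₁ b₂ b₃ c b₁' b₂' b₃' c'
      ((a₂ * a₄ * a₆ + b₁ * b₂ * b₃) / c) := by
  obtain ⟨r, hr⟩ : ∃ r, r = (a₂ * a₄ * a₆ + b₁ * b₂ * b₃) / c := ⟨_, rfl⟩
  have c_mul_r : a₂ * a₄ * a₆ + b₁ * b₂ * b₃ = c * r := by rw [hr, mul_div_cancel₀ _ hc]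
  rw [c_mul_r] at h₁ h₂ h₃ hc'
  rw [← hr]
  refine ⟨c_mul_r.symm, mul_left_cancel₀ hc ?_, mul_left_cancel₀ hc ?_, mul_left_cancel₀ hc ?_,
    mul_left_cancel₀ (pow_ne_zero 2 hc) ?_⟩
  · linear_combination h₁
  · linear_combination h₂
  · linear_combination h₃
  · linear_combination hc'

section

variable (h : IsHexahedronMove a₁ a₂ a₃ a₄ a₅ a₆ b₁ b₂ b₃ c b₁' b₂' b₃' c' r)
include h

theorem r_eq_div (hc : c ≠ 0) : (a₂ * a₄ * a₆ + b₁ * b₂ * b₃) / c = r := by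
  rw [← h.c_mul_r, mul_div_cancel_left₀ _ hc]

theorem ptolemyFlip_b₂_mul_add (hb₂ : b₂ ≠ 0) :
    ptolemyFlip b₂ a₂ a₃ a₄ c * a₆ + b₁ * b₃ = c * b₂' := by
  rw [ptolemyFlip]
  field_simp
  linear_combination -h.c_mul_r - c * h.b₂_mul

theorem ptolemyFlip_b₃_mul_add (hb₃ : b₃ ≠ 0) :
    ptolemyFlip b₃ a₆ c a₄ a₅ * a₂ + b₁ * b₂ = c * b₃' := by
  rw [ptolemyFlip]
  field_simp
  linear_combination -h.c_mul_r - c * h.b₃_mul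

theorem ptolemyFlip_b₂_mul_ptolemyFlip_b₃_add
    (hb₁ : b₁ ≠ 0) (hb₂ : b₂ ≠ 0) (hb₃ : b₃ ≠ 0) (hb₁' : b₁' ≠ 0) :
    ptolemyFlip b₂ a₂ a₃ a₄ c * ptolemyFlip b₃ a₆ c a₄ a₅ + a₄ * b₁ =
      c * ptolemyFlip b₁' c' a₃ a₄ a₅ := by
  have numerator_eq : (a₂ * a₄ + a₃ * c) * (a₆ * a₄ + c * a₅) + a₄ * b₁ * (b₂ * b₃) =
      c * (a₃ * a₅ * c + a₄ * (r + a₃ * a₆ + a₂ * a₅)) := by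
    linear_combination -a₄ * h.c_mul_r
  have numerator_mul_b₁' : (a₃ * a₅ * c + a₄ * (r + a₃ * a₆ + a₂ * a₅)) * b₁' =
      b₂ * b₃ * (c' * a₄ + a₃ * a₅) := by
    apply mul_left_cancel₀ hb₁
    linear_combination (a₃ * a₅ * c + a₄ * (r + a₃ * a₆ + a₂ * a₅)) * h.b₁_mul
      - a₄ * h.b_mul_c' + a₃ * a₅ * h.c_mul_r
  simp only [ptolemyFlip]
  field_simp
  linear_combination b₁' * numerator_eq + c * numerator_mul_b₁'

end

end IsHexahedronMove

theorem stmt11 {K : Type*} [Field K]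
    (a₁ a₂ a₃ a₄ a₅ a₆ b₁ b₂ b₃ c b₁' b₂' b₃' c' : K)
    (ha₁ : a₁ ≠ 0) (ha₂ : a₂ ≠ 0) (ha₃ : a₃ ≠ 0) (ha₄ : a₄ ≠ 0) (ha₅ : a₅ ≠ 0) (ha₆ : a₆ ≠ 0)
    (hb₁ : b₁ ≠ 0) (hb₂ : b₂ ≠ 0) (hb₃ : b₃ ≠ 0) (hc : c ≠ 0)
    (hb₁' : b₁' ≠ 0) (hb₂' : b₂' ≠ 0) (hb₃' : b₃' ≠ 0) (hc' : c' ≠ 0)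
    (h1 : c * b₁ * b₁' = a₂ * a₄ * a₆ + b₁ * b₂ * b₃ + c * (a₁ * a₄))
    (h2 : c * b₂ * b₂' = a₂ * a₄ * a₆ + b₁ * b₂ * b₃ + c * (a₃ * a₆))
    (h3 : c * b₃ * b₃' = a₂ * a₄ * a₆ + b₁ * b₂ * b₃ + c * (a₂ * a₅))
    (h4 : b₁ * b₂ * b₃ * c ^ 2 * c' =
      (a₂ * a₄ * a₆ + b₁ * b₂ * b₃) ^ 2
      + (a₂ * a₄ * a₆ + b₁ * b₂ * b₃) * (a₁ * a₄ + a₃ * a₆ + a₂ * a₅) * c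
      + (a₁ * a₂ * a₄ * a₅ + a₁ * a₃ * a₄ * a₆ + a₂ * a₃ * a₅ * a₆) * c ^ 2
      + a₁ * a₃ * a₅ * c ^ 3) :
    R1 b₂ a₂ a₃ a₄ c * S2 b₁ a₁ a₂ c a₆ * R1 b₃ a₆ c a₄ a₅ =
      S2 b₃' a₁ a₂ a₃ c' * R1 b₁' c' a₃ a₄ a₅ * S2 b₂' a₁ c' a₅ a₆ := by
  have h := IsHexahedronMove.of_recurrence hc h1 h2 h3 h4
  have h' := h.antipode (mul_ne_zero (mul_ne_zero hb₁ hb₂) hb₃)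
  rw [R1_mul_S2_mul_R1 _ _ _ _ ha₅ ha₆ hb₁ hb₂ hb₃ hc,
    S2_mul_R1_mul_S2 _ _ _ _ ha₅ ha₆ hb₁' hb₂' hb₃' hc']
  rw [h.ptolemyFlip_b₂_mul_ptolemyFlip_b₃_add hb₁ hb₂ hb₃ hb₁', h.ptolemyFlip_b₂_mul_add hb₂,
    h.ptolemyFlip_b₃_mul_add hb₃]
  rw [h'.ptolemyFlip_b₂_mul_ptolemyFlip_b₃_add hb₁' hb₂' hb₃' hb₁,
    h'.ptolemyFlip_b₂_mul_add hb₂', h'.ptolemyFlip_b₃_mul_add hb₃', h'.r_eq_div hc']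
  simp only [mul_div_cancel_left₀ _ hc, mul_div_cancel_left₀ _ hc']
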